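/- Let 𝕐 ⊆ 𝕏 be a maximal p_j-subscheme. Then there exists a choice of elements e_{j1},…,e_{jκ_j} ∈ 𝒪_{𝕏,p_j} whose residue classes form a K-basis of κ(p_j) such that the corresponding minimal separators satisfy I_{𝕐/𝕏} = ⟨f*_{j1},…,f*_{jκ_j}⟩_R, and for all i ∈ ℤ one has ΔHF_𝕐(i) = ΔHF_𝕏(i) − #{k ∈ {1,…,κ_j} | deg(f*_{jk}) = i}, where ΔHF(i) = HF(i) − HF(i−1). -/

import Mathlib

noncomputable section

/-! An algebraic model for a 0-dimensional subscheme `𝕏 ⊆ ℙⁿ_K` whose support avoids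
the hyperplane `Z(X₀)`.  The scheme is recorded through the local rings
`𝒪_{𝕏,p_j}` at the points `p_1, …, p_s` of its support, together with the germ map
sending a homogeneous polynomial `F` of degree `i` to the tuple of germs
`(F_{p_1}, …, F_{p_s})`; this is the degree-`i` component of the injection
`ĩ : R → Q^h(R) ≅ ∏_j 𝒪_{𝕏,p_j}[T_j, T_j⁻¹]`, where every graded component of
`Q^h(R)` is identified with `Γ = ∏_j 𝒪_{𝕏,p_j}` by dropping the powers of the `T_j`.
Since `x₀` has germ `1` at every point, the homogeneous coordinate ring
`R = P/I_𝕏` is faithfully encoded by the chain of subspaces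
`R_i ≅ V_i = germ(P_i) ⊆ Γ` (with `V_i ⊆ V_{i+1}`, and `V_i = Γ` for `i ≫ 0`). -/

/-- The data of one (fat) point of a 0-dimensional scheme: a finite local `K`-algebra. -/
structure PointData (K : Type) [Field K] : Type 1 where
  carrier : Type
  [ring : CommRing carrier]
  [alg : Algebra K carrier]
  [loc : IsLocalRing carrier]
  [findim : FiniteDimensional K carrier]

attribute [instance] PointData.ring PointData.alg PointData.loc PointData.findim

/-- A model of a 0-dimensional subscheme of `ℙⁿ_K`, no point of whose support lies
on `Z(X₀)` (coordinates being chosen so that each point has `X₀`-coordinate 1, the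
germ of `x₀` at every point is `1`). -/
structure ZeroDimScheme (K : Type) [Field K] (n : ℕ) : Type 1 where
  /-- the number of points in the support -/
  s : ℕ
  spos : 0 < s
  /-- the local rings `𝒪_{𝕏,p_j}` -/
  pt : Fin s → PointData K
  /-- the germ map: for `F` homogeneous of degree `i` this is the degree-`i`
  component of `ĩ : R → Q^h(R)`, i.e. `F ↦ (F_{p_1}, …, F_{p_s})` -/
  germ : MvPolynomial (Fin (n + 1)) K →ₐ[K] ∀ j, (pt j).carrier
  /-- the germ of `X₀` at each point is `1` -/
  germ_X0 : germ (MvPolynomial.X 0) = 1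
  /-- in all large degrees, the germ map is surjective onto `∏_j 𝒪_{𝕏,p_j}`
  (this characterizes `I_𝕏` as the full homogeneous vanishing ideal of the scheme) -/
  eventually_surj : ∃ N : ℕ, ∀ i, N ≤ i →
    Submodule.map germ.toLinearMap
      (MvPolynomial.homogeneousSubmodule (Fin (n + 1)) K i) = ⊤

namespace ZeroDimScheme

variable {K : Type} [Field K] {n : ℕ}

/-- `Γ = ∏_j 𝒪_{𝕏,p_j}`, the common model for every graded component of `Q^h(R)`. -/
abbrev Gamma (S : ZeroDimScheme K n) : Type := ∀ j, (S.pt j).carrier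

variable (S : ZeroDimScheme K n)

/-- `V i ⊆ Γ` is the image of the degree-`i` component `R_i` of the homogeneous
coordinate ring `R` under (the degree-`i` component of) `ĩ`; we identify `R_i ≅ V i`. -/
def V (i : ℕ) : Submodule K S.Gamma :=
  Submodule.map S.germ.toLinearMap
    (MvPolynomial.homogeneousSubmodule (Fin (n + 1)) K i)

/-- `R_i` for `i : ℤ` (zero in negative degrees). -/
def Vz (i : ℤ) : Submodule K S.Gamma := if 0 ≤ i then S.V i.toNat else ⊥

/-- `deg 𝕏 = Σ_j dim_K 𝒪_{𝕏,p_j}`. -/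
def degX : ℕ := Module.finrank K S.Gamma

/-- The Hilbert function `HF_𝕏(i) = dim_K R_i`. -/
def HF (i : ℕ) : ℕ := Module.finrank K (S.V i)

/-- The Hilbert function on `ℤ`. -/
def HFz (i : ℤ) : ℕ := Module.finrank K (S.Vz i)

/-- The regularity index `r_𝕏`: the least `r` with `HF_𝕏(i) = deg 𝕏` for all `i ≥ r`. -/
def rX : ℕ := sInf {r : ℕ | ∀ i, r ≤ i → S.HF i = S.degX}

/-- `κ_j = dim_K κ(p_j)`, the residue field of `𝕏` at `p_j`. -/
def kappa (j : Fin S.s) : ℕ :=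
  Module.finrank K
    ((S.pt j).carrier ⧸
      Submodule.restrictScalars K (IsLocalRing.maximalIdeal (S.pt j).carrier))

/-- `sj` is a socle element of `𝒪_{𝕏,p_j}`, i.e. `sj ∈ Ann(𝔪_{𝕏,p_j})`.  By
Proposition 1.2, the maximal `p_j`-subschemes `𝕐 ⊆ 𝕏` correspond 1-1 to the ideals
of `Γ` generated by `(0,…,0,sj,0,…,0)` with `sj` a *nonzero* socle element. -/
def IsSocle (j : Fin S.s) (sj : (S.pt j).carrier) : Prop :=
  ∀ b ∈ IsLocalRing.maximalIdeal (S.pt j).carrier, sj * b = 0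

/-- The ideal `U = ⟨(0,…,0,sj,0,…,0)⟩` of `Γ` corresponding to the maximal
`p_j`-subscheme `𝕐` determined by the socle element `sj`; one has `I_{𝕐/𝕏} = ĩ⁻¹(U)`. -/
def sepIdeal (j : Fin S.s) (sj : (S.pt j).carrier) : Submodule K S.Gamma :=
  Submodule.restrictScalars K (Ideal.span {(Pi.single j sj : S.Gamma)})

/-- The degree-`i` component `(I_{𝕐/𝕏})_i = R_i ∩ ĩ⁻¹(U)` of the ideal of the maximal
`p_j`-subscheme `𝕐` (given by the socle element `sj`) in `R`. -/
def IY (j : Fin S.s) (sj : (S.pt j).carrier) (i : ℕ) : Submodule K S.Gamma :=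
  S.V i ⊓ S.sepIdeal j sj

/-- `(I_{𝕐/𝕏})_i` for `i : ℤ`. -/
def IYz (j : Fin S.s) (sj : (S.pt j).carrier) (i : ℤ) : Submodule K S.Gamma :=
  S.Vz i ⊓ S.sepIdeal j sj

/-- The Hilbert function `HF_𝕐(i) = HF_𝕏(i) - dim_K (I_{𝕐/𝕏})_i` of the maximal
`p_j`-subscheme `𝕐` given by the socle element `sj`. -/
def HFY (j : Fin S.s) (sj : (S.pt j).carrier) (i : ℕ) : ℕ :=
  S.HF i - Module.finrank K (S.IY j sj i)

/-- `HF_𝕐` on `ℤ`. -/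
def HFYz (j : Fin S.s) (sj : (S.pt j).carrier) (i : ℤ) : ℕ :=
  S.HFz i - Module.finrank K (S.IYz j sj i)

/-- `α_{𝕐/𝕏} = min {i | (I_{𝕐/𝕏})_i ≠ 0}`. -/
def alphaY (j : Fin S.s) (sj : (S.pt j).carrier) : ℕ :=
  sInf {i : ℕ | S.IY j sj i ≠ ⊥}

/-- `μ(a) = min {i | (0,…,0,a T_j^i,0,…,0) ∈ ĩ(R)}` for `a ∈ 𝒪_{𝕏,p_j}`. -/
def mu (j : Fin S.s) (a : (S.pt j).carrier) : ℕ :=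
  sInf {i : ℕ | (Pi.single j a : S.Gamma) ∈ S.V i}

/-- `μ_{𝕐/𝕏}`, the maximal degree of a minimal separator of the maximal
`p_j`-subscheme `𝕐` given by the socle element `sj`; independently of all choices it
equals `max {μ(a·sj) | a ∈ 𝒪_{𝕏,p_j}, a·sj ≠ 0}`. -/
def muY (j : Fin S.s) (sj : (S.pt j).carrier) : ℕ :=
  sSup {m : ℕ | ∃ a : (S.pt j).carrier, a * sj ≠ 0 ∧ m = S.mu j (a * sj)}

/-- `deg_𝕏(p_j) = min {μ_{𝕐/𝕏} | 𝕐 a maximal p_j-subscheme of 𝕏}`. -/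
def degP (j : Fin S.s) : ℕ :=
  sInf {m : ℕ | ∃ sj : (S.pt j).carrier, S.IsSocle j sj ∧ sj ≠ 0 ∧ m = S.muY j sj}

/-- `𝕏` has the Cayley–Bacharach property of degree `d`: `deg_𝕏(p_j) ≥ d + 1` for all `j`. -/
def CBP (d : ℕ) : Prop := ∀ j : Fin S.s, d + 1 ≤ S.degP j

/-- `𝕏` is a Cayley–Bacharach scheme: it has `CBP(r_𝕏 - 1)`. -/
def CayleyBacharach : Prop := S.CBP (S.rX - 1)

/-- The residue class map `𝒪_{𝕏,p_j} → κ(p_j)` as a `K`-linear map. -/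
def resQ (j : Fin S.s) :
    (S.pt j).carrier →ₗ[K]
      ((S.pt j).carrier ⧸
        Submodule.restrictScalars K (IsLocalRing.maximalIdeal (S.pt j).carrier)) :=
  (Submodule.restrictScalars K (IsLocalRing.maximalIdeal (S.pt j).carrier)).mkQ

/-- The residue classes of `e 0, …, e (κ_j - 1)` form a `K`-basis of `κ(p_j)`. -/
def IsResidueBasis (j : Fin S.s) {m : ℕ} (e : Fin m → (S.pt j).carrier) : Prop :=
  LinearIndependent K (fun k => S.resQ j (e k)) ∧
    Submodule.span K (Set.range fun k => S.resQ j (e k)) = ⊤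

/-- A family `τ_j : 𝒪_{𝕏,p_j} → K` of trace maps: each `τ_j` is a generator of
`Hom_K(𝒪_{𝕏,p_j}, K)` as an `𝒪_{𝕏,p_j}`-module.  Such a family exists iff `𝕏` is
locally Gorenstein, and it induces a homogeneous trace map `σ` of degree zero of
`Q^h(R)/L₀` (componentwise). -/
def IsTraceFamily (τ : ∀ j, (S.pt j).carrier →ₗ[K] K) : Prop :=
  ∀ j, Function.Bijective
    (fun a : (S.pt j).carrier => (τ j).comp (LinearMap.mulRight K a))

/-- The total trace `Γ → K`, `y ↦ Σ_j τ_j (y_j)`; on the degree-`i` component of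
`Q^h(R)` the trace map `σ` is `q ↦ (Ttot τ q)·x₀^i`. -/
def Ttot (τ : ∀ j, (S.pt j).carrier →ₗ[K] K) : S.Gamma →ₗ[K] K :=
  ∑ j : Fin S.s, (τ j).comp (LinearMap.proj j)

/-- The degree-`k` component `(𝔠^σ_𝕏)_k ⊆ Q^h(R)_k ≅ Γ` of the Dedekind complementary
module: `g ∈ (𝔠^σ_𝕏)_k` iff `σ(g · R) ⊆ K[x₀]`, i.e. `Ttot τ (g·x) = 0` whenever
`x ∈ R_i` with `k + i < 0`. -/
def Cmod (τ : ∀ j, (S.pt j).carrier →ₗ[K] K) (k : ℤ) : Submodule K S.Gamma :=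
  ⨅ (i : ℕ) (_ : k + (i : ℤ) < 0) (x : S.Gamma) (_ : x ∈ S.V i),
    LinearMap.ker ((S.Ttot τ).comp (LinearMap.mulRight K x))

/-- The degree-`i` component `(δ^σ_𝕏)_i ⊆ Q^h(R)_i ≅ Γ` of the Dedekind different
`δ^σ_𝕏 = {f ∈ Q^h(R) | f · 𝔠^σ_𝕏 ⊆ R}`. -/
def delta (τ : ∀ j, (S.pt j).carrier →ₗ[K] K) (i : ℤ) : Submodule K S.Gamma :=
  ⨅ (k : ℤ) (g : S.Gamma) (_ : g ∈ S.Cmod τ k),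
    Submodule.comap (LinearMap.mulRight K g) (S.Vz (i + k))

/-- The Hilbert function of the Dedekind different. -/
def HFdelta (τ : ∀ j, (S.pt j).carrier →ₗ[K] K) (i : ℤ) : ℕ :=
  Module.finrank K (S.delta τ i)

/-- `𝕏` has minimal Dedekind different: `δ^σ_𝕏 = ⊕_{i ≥ 2 r_𝕏} R_i`
(recall `R_i ≅ Γ` for `i ≥ r_𝕏`). -/
def MinimalDedekind (τ : ∀ j, (S.pt j).carrier →ₗ[K] K) : Prop :=
  ∀ i : ℤ, S.delta τ i = if 2 * (S.rX : ℤ) ≤ i then ⊤ else ⊥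

/-- The degree-`i` component (`i ≥ 0`) of the conductor
`𝔉_{R̃/R} = {f ∈ R̃ | f·R̃ ⊆ R}` of `R` in `R̃ = ∏_j 𝒪_{𝕏,p_j}[T_j]`
(whose degree-`i` component is all of `Γ` for every `i ≥ 0`). -/
def cond (i : ℕ) : Submodule K S.Gamma :=
  ⨅ y : S.Gamma, Submodule.comap (LinearMap.mulRight K y) (S.V i)

/-- The conductor on `ℤ` (zero in negative degrees, where `R̃` vanishes). -/
def condZ (i : ℤ) : Submodule K S.Gamma := if 0 ≤ i then S.cond i.toNat else ⊥

/-- The degree-`i` component of the trace `tr(𝔠^σ_𝕏) = δ^σ_𝕏 · 𝔠^σ_𝕏` of the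
Dedekind complementary module. -/
def trC (τ : ∀ j, (S.pt j).carrier →ₗ[K] K) (i : ℤ) : Submodule K S.Gamma :=
  ⨆ (a : ℤ) (b : ℤ) (_ : a + b = i), S.delta τ a * S.Cmod τ b

/-- `𝕏` is nearly Gorenstein: `𝔪 ⊆ tr(𝔠^σ_𝕏)`. -/
def NearlyGorenstein (τ : ∀ j, (S.pt j).carrier →ₗ[K] K) : Prop :=
  ∀ i : ℤ, 1 ≤ i → S.Vz i ≤ S.trC τ i

/-- `𝕏` is almost Gorenstein: there is an exact sequence of graded `R`-modules
`0 → R → 𝔠^σ_𝕏(-r_𝕏) → C → 0` with `𝔪·C = 0`.  A degree-zero graded injection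
`R → 𝔠^σ_𝕏(-r_𝕏)` is multiplication by an element `g ∈ (𝔠^σ_𝕏)_{-r_𝕏}` with
`Ann_R(g) = 0`, and `𝔪·C = 0` means `𝔪 · 𝔠^σ_𝕏(-r_𝕏) ⊆ g·R`. -/
def AlmostGorenstein (τ : ∀ j, (S.pt j).carrier →ₗ[K] K) : Prop :=
  ∃ g ∈ S.Cmod τ (-(S.rX : ℤ)),
    (∀ i : ℕ, ∀ x ∈ S.V i, x * g = 0 → x = 0) ∧
    (∀ a : ℕ, 1 ≤ a → ∀ x ∈ S.V a, ∀ k : ℤ, ∀ h ∈ S.Cmod τ k,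
      x * h ∈ Submodule.map (LinearMap.mulRight K g) (S.Vz ((a : ℤ) + k + (S.rX : ℤ))))

/-- `𝕏` is arithmetically Gorenstein, i.e. `R` is a Gorenstein ring; equivalently the
canonical module is free of rank one: `𝔠^σ_𝕏 = g·R` for some `g ∈ (𝔠^σ_𝕏)_{-r_𝕏}`. -/
def ArithGorenstein (τ : ∀ j, (S.pt j).carrier →ₗ[K] K) : Prop :=
  ∃ g ∈ S.Cmod τ (-(S.rX : ℤ)),
    ∀ k : ℤ, S.Cmod τ k = Submodule.map (LinearMap.mulRight K g) (S.Vz (k + (S.rX : ℤ)))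

/-- `𝕏` is level: the socle of `R̄ = R/⟨x₀⟩` equals `R̄_{r_𝕏}`, i.e. no nonzero
homogeneous element of `R̄` of degree `< r_𝕏` is annihilated by `𝔪̄` (recall
`R̄_i ≅ V i / V (i-1)` and `x₀`-multiplication preserves germs). -/
def Level : Prop :=
  ∀ i : ℕ, i < S.rX → ∀ x ∈ S.V i,
    (∀ a : ℕ, 1 ≤ a → ∀ y ∈ S.V a, x * y ∈ S.Vz ((i : ℤ) + (a : ℤ) - 1)) →
      x ∈ S.Vz ((i : ℤ) - 1)

/-- The subspace `{x ∈ Γ | x_k = 0 for k ≠ j}` of `Γ`: the degreewise model for the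
ideal of the subscheme `𝕐_j ⊆ 𝕏` with `I_{𝕐_j} = ∩_{k ≠ j} I_k`. -/
def Wj (j : Fin S.s) : Submodule K S.Gamma :=
  ⨅ (k : Fin S.s) (_ : k ≠ j),
    LinearMap.ker (LinearMap.proj k : S.Gamma →ₗ[K] (S.pt k).carrier)

/-- `(I_{𝕐_j/𝕏})_i` for the subscheme `𝕐_j` complementary to `p_j`. -/
def IW (j : Fin S.s) (i : ℕ) : Submodule K S.Gamma := S.V i ⊓ S.Wj j

/-- The Hilbert function of the subscheme `𝕐_j` complementary to `p_j`. -/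
def HFW (j : Fin S.s) (i : ℕ) : ℕ := S.HF i - Module.finrank K (S.IW j i)

/-- `α_{𝕐_j/𝕏}` for the subscheme `𝕐_j` complementary to `p_j`. -/
def alphaW (j : Fin S.s) : ℕ := sInf {i : ℕ | S.IW j i ≠ ⊥}

/-- The subspace `{x ∈ Γ | x_k = 0 for k ∉ {j₁, j₂}}` of `Γ`: the degreewise model for
the ideal in `R` of the subscheme of the reduced scheme `𝕏` complementary to `{p_{j₁}, p_{j₂}}`. -/
def Wpair (j1 j2 : Fin S.s) : Submodule K S.Gamma :=
  ⨅ (k : Fin S.s) (_ : k ≠ j1) (_ : k ≠ j2),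
    LinearMap.ker (LinearMap.proj k : S.Gamma →ₗ[K] (S.pt k).carrier)

/-- The homogeneous vanishing ideal `I_𝕏 ⊆ P`. -/
def IX : Ideal (MvPolynomial (Fin (n + 1)) K) :=
  Ideal.span {F | (∃ i : ℕ, F ∈ MvPolynomial.homogeneousSubmodule (Fin (n + 1)) K i) ∧
    S.germ F = 0}

/-- The `n×n`-minor (Jacobian determinant with respect to `X_1, …, X_n`) of an
`n`-tuple of polynomials. -/
def jacMinor (Fs : Fin n → MvPolynomial (Fin (n + 1)) K) : MvPolynomial (Fin (n + 1)) K :=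
  Matrix.det (Matrix.of fun a b : Fin n => MvPolynomial.pderiv (Fin.succ b) (Fs a))

/-- The preimage in `P` of the Kähler different `ϑ_𝕏 ⊆ R`: the ideal generated by
`I_𝕏` together with all `n×n` minors of the Jacobian matrix of elements of `I_𝕏`. -/
def KaehlerIdeal : Ideal (MvPolynomial (Fin (n + 1)) K) :=
  S.IX ⊔ Ideal.span {m | ∃ Fs : Fin n → MvPolynomial (Fin (n + 1)) K,
    (∀ a, Fs a ∈ S.IX) ∧ m = jacMinor Fs}

/-- The degree-`i` component of the Kähler different `ϑ_𝕏 ⊆ R`, viewed inside `Γ`. -/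
def thetaPiece (i : ℕ) : Submodule K S.Gamma :=
  Submodule.map S.germ.toLinearMap
    (Submodule.restrictScalars K S.KaehlerIdeal ⊓
      MvPolynomial.homogeneousSubmodule (Fin (n + 1)) K i)

end ZeroDimScheme

end

/-! Multiplication by the socle element `sj` identifies the residue field `κ(p_j)` with the ideal
`⟨(0,…,sj,…,0)⟩ ⊆ Γ`, so intersecting that ideal with the chain `V 0 ⊆ V 1 ⊆ ⋯` amounts to
filtering `κ(p_j)`. A basis of `κ(p_j)` adapted to this filtration lifts to elements `e k` for
which `(I_{𝕐/𝕏})_i` has as a basis exactly those `(0,…,e k * sj,…,0)` with `μ(e k * sj) ≤ i`.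
Both the generation of `I_{𝕐/𝕏}` and the formula for `ΔHF_𝕐` are read off from these bases. -/

open Submodule

section AdaptedBasis

variable {K M : Type*} [DivisionRing K] [AddCommGroup M] [Module K M]

theorem exists_linearIndepOn_id_le_span_inter {W : ℕ → Submodule K M} (hW : Monotone W) (N : ℕ) :
    ∃ s : Set M, s ⊆ W N ∧ LinearIndepOn K id s ∧ ∀ i < N, W i ≤ span K (s ∩ W i) := by
  induction N with
  | zero => exact ⟨∅, Set.empty_subset _, linearIndepOn_empty K id, by simp⟩
  | succ N ih =>
    obtain ⟨s, hsN, hs, hspan⟩ := ih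
    obtain ⟨t, htN, hst, hNt, ht⟩ := exists_linearIndepOn_id_extension hs hsN
    refine ⟨t, htN.trans (hW N.le_succ), ht, fun i hi => ?_⟩
    obtain hi | rfl := Nat.lt_succ_iff_lt_or_eq.mp hi
    · exact (hspan i hi).trans (span_mono (Set.inter_subset_inter_left _ hst))
    · rwa [Set.inter_eq_left.mpr htN]

theorem exists_basis_eq_span_image [FiniteDimensional K M] {W : ℕ → Submodule K M}
    (hW : Monotone W) {d : ℕ} (hd : Module.finrank K M = d) :
    ∃ b : Module.Basis (Fin d) K M, ∀ i, W i = span K (b '' {k | b k ∈ W i}) := by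
  obtain ⟨N, hN⟩ := monotone_stabilizes_iff_noetherian.mpr
    (inferInstance : IsNoetherian K M) ⟨W, hW⟩
  obtain ⟨s, -, hs, hspan⟩ := exists_linearIndepOn_id_le_span_inter hW (N + 1)
  have hspan_all (i : ℕ) : W i ≤ span K (s ∩ W i) := by
    obtain hi | hi := le_total i N
    · exact hspan i (Nat.lt_succ_of_le hi)
    · have hstable : W N = W i := hN i hi
      simpa only [hstable] using hspan N N.lt_succ_self
  let b₀ := Module.Basis.extend hs
  have : Finite (hs.extend (Set.subset_univ s)) := Module.Finite.finite_basis b₀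
  have hcard := (Module.finrank_eq_nat_card_basis b₀).symm.trans hd
  let b := b₀.reindex (Finite.equivFinOfCardEq hcard)
  have hsb : s ⊆ Set.range b := by
    rw [Module.Basis.range_reindex, Module.Basis.range_extend]
    exact Module.Basis.subset_extend hs
  refine ⟨b, fun i => le_antisymm ((hspan_all i).trans (span_mono ?_)) (span_le.mpr ?_)⟩
  · rintro x ⟨hxs, hxi⟩
    obtain ⟨k, rfl⟩ := hsb hxs
    exact ⟨k, hxi, rfl⟩
  · exact Set.image_subset_iff.mpr fun _ hk => hk

theorem finrank_span_image_setOf {ι : Type*} [Fintype ι] {v : ι → M}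
    (hv : LinearIndependent K v) (p : ι → Prop) [DecidablePred p] :
    Module.finrank K (span K (v '' {k | p k})) = (Finset.univ.filter p).card := by
  rw [Set.image_eq_range]
  exact (finrank_span_eq_card (hv.comp _ Subtype.val_injective)).trans (Fintype.card_subtype p)

end AdaptedBasis

theorem card_filter_le_eq_card_filter_le_sub_one_add {ι : Type*} [Fintype ι] (f : ι → ℤ) (i : ℤ) :
    (Finset.univ.filter fun k => f k ≤ i).card =
      (Finset.univ.filter fun k => f k ≤ i - 1).card +
        (Finset.univ.filter fun k => f k = i).card := by
  classical
  have hdisj : Disjoint (Finset.univ.filter fun k => f k ≤ i - 1)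
      (Finset.univ.filter fun k => f k = i) :=
    Finset.disjoint_filter.mpr fun k _ hlt heq => by omega
  rw [← Finset.card_union_of_disjoint hdisj, ← Finset.filter_or]
  congr 1
  ext k
  simp only [Finset.mem_filter_univ]
  omega

namespace ZeroDimScheme

variable {K : Type} [Field K] {n : ℕ} (S : ZeroDimScheme K n)

section Filtration

theorem one_mem_V (i : ℕ) : (1 : S.Gamma) ∈ S.V i :=
  ⟨MvPolynomial.X 0 ^ i, MvPolynomial.isHomogeneous_X_pow 0 i, by simp [S.germ_X0]⟩

variable {S} in
theorem mul_mem_V {i k : ℕ} {x y : S.Gamma} (hx : x ∈ S.V i) (hy : y ∈ S.V k) :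
    x * y ∈ S.V (i + k) := by
  obtain ⟨f, hf, rfl⟩ := hx
  obtain ⟨g, hg, rfl⟩ := hy
  exact ⟨f * g, MvPolynomial.IsHomogeneous.mul hf hg, map_mul S.germ f g⟩

theorem V_mono : Monotone S.V := by
  intro i k hik x hx
  simpa only [mul_one, Nat.add_sub_cancel' hik] using mul_mem_V hx (S.one_mem_V (k - i))

theorem Vz_natCast (i : ℕ) : S.Vz i = S.V i := by
  simp [Vz]

theorem Vz_of_neg {i : ℤ} (hi : i < 0) : S.Vz i = ⊥ :=
  if_neg hi.not_ge

variable {S} in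
theorem mul_mem_V_of_mem_Vz_sub {i m : ℕ} {x y : S.Gamma} (hx : x ∈ S.Vz (i - m))
    (hy : y ∈ S.V m) : x * y ∈ S.V i := by
  obtain hmi | hmi := le_or_gt m i
  · rw [← Nat.cast_sub hmi, Vz_natCast] at hx
    simpa only [Nat.sub_add_cancel hmi] using mul_mem_V hx hy
  · rw [S.Vz_of_neg (by omega), mem_bot] at hx
    simp [hx]

theorem mu_le_iff (j : Fin S.s) (a : (S.pt j).carrier) (i : ℕ) :
    S.mu j a ≤ i ↔ (Pi.single j a : S.Gamma) ∈ S.V i := by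
  refine ⟨fun h => S.V_mono h ?_, fun h => Nat.sInf_le h⟩
  obtain ⟨N, hN⟩ := S.eventually_surj
  have hmem : (Pi.single j a : S.Gamma) ∈ S.V N := (hN N le_rfl).ge mem_top
  exact Nat.sInf_mem (s := {i : ℕ | (Pi.single j a : S.Gamma) ∈ S.V i}) ⟨N, hmem⟩

end Filtration

section SocleMultiplication

variable {j : Fin S.s} {sj : (S.pt j).carrier}

theorem mem_sepIdeal {x : S.Gamma} :
    x ∈ S.sepIdeal j sj ↔ ∃ a : (S.pt j).carrier, Pi.single j (a * sj) = x := by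
  refine Ideal.mem_span_singleton'.trans ⟨?_, ?_⟩
  · rintro ⟨y, rfl⟩
    exact ⟨y j, Pi.single_mul_right (α := fun j => (S.pt j).carrier) sj⟩
  · rintro ⟨a, rfl⟩
    exact ⟨Pi.single j a, (Pi.single_mul (α := fun j => (S.pt j).carrier) j a sj).symm⟩

theorem resQ_surjective (j : Fin S.s) : Function.Surjective (S.resQ j) :=
  mkQ_surjective _

/-- Multiplication by a socle element `sj`, which factors through the residue field of `p_j`,
as a `K`-linear map `κ(p_j) → Γ` onto the ideal `S.sepIdeal j sj`. -/
noncomputable def socleMul (hsoc : S.IsSocle j sj) :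
    ((S.pt j).carrier ⧸ restrictScalars K (IsLocalRing.maximalIdeal (S.pt j).carrier)) →ₗ[K]
      S.Gamma :=
  liftQ _ (LinearMap.single K (fun j => (S.pt j).carrier) j ∘ₗ LinearMap.mulRight K sj) <| by
    intro b hb
    have hbsj : b * sj = 0 := (mul_comm b sj).trans (hsoc b hb)
    simp [hbsj]

theorem socleMul_resQ (hsoc : S.IsSocle j sj) (a : (S.pt j).carrier) :
    S.socleMul hsoc (S.resQ j a) = Pi.single j (a * sj) :=
  rfl

theorem range_socleMul (hsoc : S.IsSocle j sj) :
    LinearMap.range (S.socleMul hsoc) = S.sepIdeal j sj := by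
  ext x
  rw [LinearMap.mem_range, (S.resQ_surjective j).exists, mem_sepIdeal]
  rfl

theorem ker_socleMul (hsoc : S.IsSocle j sj) (hsj : sj ≠ 0) :
    LinearMap.ker (S.socleMul hsoc) = ⊥ := by
  refine LinearMap.ker_eq_bot'.mpr ((S.resQ_surjective j).forall.mpr fun a ha => ?_)
  have hasj : a * sj = 0 := by rwa [socleMul_resQ, Pi.single_eq_zero_iff] at ha
  have ha_nonunit : ¬IsUnit a := fun hu => hsj (hu.mul_right_eq_zero.mp hasj)
  exact (Quotient.mk_eq_zero _).mpr ((IsLocalRing.mem_maximalIdeal a).mpr ha_nonunit)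

theorem linearIndependent_single_mul {ι : Type*} {e : ι → (S.pt j).carrier}
    (hsoc : S.IsSocle j sj) (hsj : sj ≠ 0) (he : LinearIndependent K fun k => S.resQ j (e k)) :
    LinearIndependent K fun k => (Pi.single j (e k * sj) : S.Gamma) :=
  he.map' (S.socleMul hsoc) (S.ker_socleMul hsoc hsj)

theorem IY_eq_map_comap (hsoc : S.IsSocle j sj) (i : ℕ) :
    S.IY j sj i = ((S.V i).comap (S.socleMul hsoc)).map (S.socleMul hsoc) := by
  rw [map_comap_eq, range_socleMul, inf_comm, IY]

end SocleMultiplication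

section AdaptedSeparators

variable {j : Fin S.s} {sj : (S.pt j).carrier} {ι : Type*} {e : ι → (S.pt j).carrier}

variable (j sj e) in
/-- The family `e` is adapted to the maximal `p_j`-subscheme `𝕐` given by `sj`: each
`(I_{𝕐/𝕏})_i` is spanned by the minimal separators `f*_{jk}` of degree at most `i`. Since `x₀` has
germ `1`, the multiple `x₀ ^ (i - deg f*_{jk}) * f*_{jk}` is encoded by the same element
`Pi.single j (e k * sj)` of `Γ` in every degree `i`. -/
def IsSeparatorAdapted : Prop :=
  ∀ i : ℕ, S.IY j sj i =
    span K ((fun k => (Pi.single j (e k * sj) : S.Gamma)) '' {k | S.mu j (e k * sj) ≤ i})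

theorem exists_isResidueBasis_isSeparatorAdapted (hsoc : S.IsSocle j sj) :
    ∃ e : Fin (S.kappa j) → (S.pt j).carrier,
      S.IsResidueBasis j e ∧ S.IsSeparatorAdapted j sj e := by
  have hmono : Monotone fun i => (S.V i).comap (S.socleMul hsoc) :=
    fun _ _ h => comap_mono (S.V_mono h)
  obtain ⟨b, hb⟩ := exists_basis_eq_span_image hmono (d := S.kappa j) rfl
  choose e he using fun k => S.resQ_surjective j (b k)
  have hb_single (k) : S.socleMul hsoc (b k) = Pi.single j (e k * sj) := by
    rw [← he, socleMul_resQ]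
  refine ⟨e, ?_, fun i => ?_⟩
  · simp only [IsResidueBasis, he]
    exact ⟨b.linearIndependent, b.span_eq⟩
  · rw [S.IY_eq_map_comap hsoc, hb i, map_span, Set.image_image]
    simp only [mem_comap, hb_single, mu_le_iff]

theorem map_mulRight_Vz_sub_mu_le_IY (a : (S.pt j).carrier) (i : ℕ) :
    (S.Vz ((i : ℤ) - S.mu j (a * sj))).map
      (LinearMap.mulRight K (Pi.single j (a * sj) : S.Gamma)) ≤ S.IY j sj i := by
  rintro _ ⟨x, hx, rfl⟩
  have hsingle : (Pi.single j (a * sj) : S.Gamma) ∈ S.sepIdeal j sj := S.mem_sepIdeal.mpr ⟨a, rfl⟩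
  exact ⟨mul_mem_V_of_mem_Vz_sub hx ((S.mu_le_iff j _ _).mp le_rfl),
    Ideal.mul_mem_left _ x hsingle⟩

variable {S}

theorem IsSeparatorAdapted.IY_eq_iSup (he : S.IsSeparatorAdapted j sj e) (i : ℕ) :
    S.IY j sj i = ⨆ k, (S.Vz ((i : ℤ) - S.mu j (e k * sj))).map
      (LinearMap.mulRight K (Pi.single j (e k * sj) : S.Gamma)) := by
  refine le_antisymm ?_ (iSup_le fun k => S.map_mulRight_Vz_sub_mu_le_IY (e k) i)
  rw [he i, span_le, Set.image_subset_iff]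
  intro k hk
  refine mem_iSup_of_mem k ⟨1, ?_, one_mul _⟩
  rw [← Nat.cast_sub hk, Vz_natCast]
  exact S.one_mem_V _

theorem IsSeparatorAdapted.IYz_eq_span (he : S.IsSeparatorAdapted j sj e) (i : ℤ) :
    S.IYz j sj i = span K ((fun k => (Pi.single j (e k * sj) : S.Gamma)) ''
      {k | (S.mu j (e k * sj) : ℤ) ≤ i}) := by
  obtain hi | hi := le_or_gt 0 i
  · lift i to ℕ using hi
    simpa only [IYz, IY, Vz_natCast, Nat.cast_le] using he i
  · have hempty : {k | (S.mu j (e k * sj) : ℤ) ≤ i} = ∅ :=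
      Set.eq_empty_of_forall_notMem fun k hk => (Int.natCast_nonneg _).not_gt (hk.trans_lt hi)
    rw [IYz, S.Vz_of_neg hi, bot_inf_eq, hempty, Set.image_empty, span_empty]

theorem cast_HFYz (i : ℤ) :
    (S.HFYz j sj i : ℤ) = S.HFz i - Module.finrank K (S.IYz j sj i) :=
  Nat.cast_sub (finrank_mono inf_le_left)

theorem IsSeparatorAdapted.HFYz_sub_HFYz_sub_one [Fintype ι] (he : S.IsSeparatorAdapted j sj e)
    (hli : LinearIndependent K fun k => (Pi.single j (e k * sj) : S.Gamma)) (i : ℤ) :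
    (S.HFYz j sj i : ℤ) - S.HFYz j sj (i - 1) = ((S.HFz i : ℤ) - S.HFz (i - 1)) -
      (Finset.univ.filter fun k => (S.mu j (e k * sj) : ℤ) = i).card := by
  have finrank_IYz (d : ℤ) : Module.finrank K (S.IYz j sj d) =
      (Finset.univ.filter fun k => (S.mu j (e k * sj) : ℤ) ≤ d).card := by
    rw [he.IYz_eq_span, finrank_span_image_setOf hli]
  rw [cast_HFYz, cast_HFYz, finrank_IYz, finrank_IYz,
    card_filter_le_eq_card_filter_le_sub_one_add _ i]
  push_cast
  ring

end AdaptedSeparators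

end ZeroDimScheme

/-- Proposition 1.5(c).  Let `𝕐 ⊆ 𝕏` be a maximal `p_j`-subscheme
(given by a nonzero socle element `sj`).  Then there is a choice of elements
`e_{j1}, …, e_{jκ_j} ∈ 𝒪_{𝕏,p_j}` whose residue classes form a `K`-basis of
`κ(p_j)` such that the corresponding minimal separators
`f*_{jk} = ĩ⁻¹((0,…,0, e_{jk}·sj·T_j^{μ(e_{jk} sj)},0,…,0))` satisfy
`I_{𝕐/𝕏} = ⟨f*_{j1}, …, f*_{jκ_j}⟩_R` (degreewise:
`(I_{𝕐/𝕏})_i = Σ_k f*_{jk} · R_{i - deg f*_{jk}}`), and for all `i ∈ ℤ` one has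
`ΔHF_𝕐(i) = ΔHF_𝕏(i) - #{k | deg f*_{jk} = i}`. -/
theorem dedekind_CB_stmt2 (K : Type) [Field K] (n : ℕ) (S : ZeroDimScheme K n)
    (j : Fin S.s) (sj : (S.pt j).carrier) (hsoc : S.IsSocle j sj) (hsj : sj ≠ 0) :
    ∃ e : Fin (S.kappa j) → (S.pt j).carrier, S.IsResidueBasis j e ∧
      (∀ i : ℕ, S.IY j sj i =
        ⨆ k : Fin (S.kappa j),
          Submodule.map (LinearMap.mulRight K (Pi.single j (e k * sj) : S.Gamma))
            (S.Vz ((i : ℤ) - (S.mu j (e k * sj) : ℤ)))) ∧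
      (∀ i : ℤ,
        (S.HFYz j sj i : ℤ) - (S.HFYz j sj (i - 1) : ℤ) =
          ((S.HFz i : ℤ) - (S.HFz (i - 1) : ℤ)) -
            ((Finset.univ.filter fun k : Fin (S.kappa j) =>
              (S.mu j (e k * sj) : ℤ) = i).card : ℤ)) := by
  obtain ⟨e, hbasis, hadapted⟩ := S.exists_isResidueBasis_isSeparatorAdapted hsoc
  have hli := S.linearIndependent_single_mul hsoc hsj hbasis.1
  exact ⟨e, hbasis, hadapted.IY_eq_iSup, hadapted.HFYz_sub_HFYz_sub_one hli⟩
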